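/- For a smooth symmetric traceless matrix field σ on R^3 and a fixed unit normal n with tangential projection Π = I - nnᵀ, define tr₁(σ) := sym(Π σ × n) (row-wise cross with n after left projection) and tr₃(σ) := 2 def_F(n·(sym curl σ)Π) - Π ∂_n(sym curl σ) Π. Then tr(tr₃(σ)) = div_F div_F tr₁(σ), where def_F u := sym(∇_F uᵀ) restricted tangentially, ∇_F = Π∇, and div_F div_F U := ∇_F · U · ∇_F. -/

import Mathlib

open Matrix MeasureTheory

noncomputable section

abbrev V3 : Type := Fin 3 → ℝ
abbrev M3 : Type := Matrix (Fin 3) (Fin 3) ℝ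

/-- `mskw a` is the skew-symmetric matrix with `mskw a *ᵥ b = a ×₃ b`. -/
def mskw (a : V3) : M3 :=
  !![0, -a 2, a 1; a 2, 0, -a 0; -a 1, a 0, 0]

/-- Partial derivative `∂_j f` at `x`. -/
def pd (j : Fin 3) (f : V3 → ℝ) (x : V3) : ℝ :=
  fderiv ℝ f x (Pi.single j 1)

/-- Curl of a vector field. -/
def curlVec (v : V3 → V3) (x : V3) : V3 :=
  ![pd 1 (fun y => v y 2) x - pd 2 (fun y => v y 1) x,
    pd 2 (fun y => v y 0) x - pd 0 (fun y => v y 2) x,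
    pd 0 (fun y => v y 1) x - pd 1 (fun y => v y 0) x]

/-- Row-wise curl of a matrix field. -/
def curlMat (U : V3 → M3) (x : V3) : M3 :=
  Matrix.of fun i j => curlVec (fun y => U y i) x j

/-- `S U = Uᵀ - tr U • I`. -/
def Smap (U : M3) : M3 := Uᵀ - U.trace • (1 : M3)

/-- `S⁻¹ U = Uᵀ - (1/2) tr U • I`. -/
def Sinv (U : M3) : M3 := Uᵀ - ((2:ℝ)⁻¹ * U.trace) • (1 : M3)

/-- Symmetric part. -/
def symPart (U : M3) : M3 := (2:ℝ)⁻¹ • (U + Uᵀ)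

/-- Deviatoric (trace-free) part. -/
def devPart (U : M3) : M3 := U - ((3:ℝ)⁻¹ * U.trace) • (1 : M3)

/-- Row-wise gradient of a vector field: `(grad v)_{ij} = ∂_j v_i`. -/
def gradMat (v : V3 → V3) (x : V3) : M3 :=
  Matrix.of fun i j => pd j (fun y => v y i) x

/-- Symmetric gradient `def v`. -/
def defSym (v : V3 → V3) (x : V3) : M3 := symPart (gradMat v x)

/-- Incompatibility operator `inc U = curl S⁻¹ curl U`. -/
def incMat (U : V3 → M3) (x : V3) : M3 :=
  curlMat (fun y => Sinv (curlMat U y)) x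

/-- Linearized Cotton–York operator `cinc U = curl S⁻¹ curl S⁻¹ curl U`. -/
def cincMat (U : V3 → M3) (x : V3) : M3 :=
  curlMat (fun y => Sinv (incMat U y)) x

/-- `divdiv U = Σ_{ij} ∂_i ∂_j U_{ij}`. -/
def divdiv (U : V3 → M3) (x : V3) : ℝ :=
  ∑ i, ∑ j, pd i (fun y => pd j (fun z => U z i j) y) x

/-- Conformal Killing field `(x·x)a - 2(a·x)x + b×x + cx + d`. -/
def CKfield (a b d : V3) (c : ℝ) : V3 → V3 :=
  fun x => (x ⬝ᵥ x) • a - (2 * (a ⬝ᵥ x)) • x + crossProduct b x + c • x + d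

/-- Entry `(def u)_{ij}` of the symmetric gradient. -/
def defEntry (u : V3 → V3) (i j : Fin 3) (x : V3) : ℝ :=
  (pd j (fun y => u y i) x + pd i (fun y => u y j) x) / 2

/-- Entry `(dev def u)_{ij}`. -/
def devDefEntry (u : V3 → V3) (i j : Fin 3) (x : V3) : ℝ :=
  defEntry u i j x - (if i = j then (3:ℝ)⁻¹ * ∑ k, pd k (fun y => u y k) x else 0)

/-- Iterated partial derivative along a list of directions. -/
def pds : List (Fin 3) → (V3 → ℝ) → V3 → ℝ
  | [], f => f
  | i :: l, f => pd i (pds l f)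

/-- Orthogonal projection of `v` onto the plane with unit normal `n`. -/
def projV (n v : V3) : V3 := v - (n ⬝ᵥ v) • n

/-- Row-wise cross product `U × n`. -/
def rowCross (U : M3) (n : V3) : M3 := Matrix.of fun i => crossProduct (U i) n

/-- Row-wise projection `U Π`. -/
def rowProj (U : M3) (n : V3) : M3 := Matrix.of fun i => projV n (U i)

/-- Frobenius inner product. -/
def frob (A B : M3) : ℝ := ∑ i, ∑ j, A i j * B i j

/-- Projection matrix `Π = I - n nᵀ`. -/
def Pmat (n : V3) : M3 := 1 - vecMulVec n n

/-- `sym curl σ`. -/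
def symCurl (σ : V3 → M3) (x : V3) : M3 := symPart (curlMat σ x)

/-- Tangential partial derivative `(Π∇)_i f`. -/
def pdF (n : V3) (i : Fin 3) (f : V3 → ℝ) (x : V3) : ℝ :=
  pd i f x - n i * ∑ k, n k * pd k f x

/-- Row-wise surface gradient of a vector field. -/
def gradFMat (n : V3) (u : V3 → V3) (x : V3) : M3 :=
  Matrix.of fun i j => pdF n j (fun y => u y i) x

/-- Surface symmetric gradient `def_F u`. -/
def defF (n : V3) (u : V3 → V3) (x : V3) : M3 := symPart (gradFMat n u x)

/-- Normal derivative of a matrix field, entrywise. -/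
def dnMat (n : V3) (τ : V3 → M3) (x : V3) : M3 :=
  Matrix.of fun i j => fderiv ℝ (fun y => τ y i j) x n

/-- `tr₁ σ = sym(Π σ × n)`. -/
def tr1 (n : V3) (σ : V3 → M3) (x : V3) : M3 :=
  symPart (rowCross (Pmat n * σ x) n)

/-- `tr₃ σ = 2 def_F(n·(sym curl σ)Π) - Π ∂ₙ(sym curl σ) Π`. -/
def tr3 (n : V3) (σ : V3 → M3) (x : V3) : M3 :=
  (2:ℝ) • defF n (fun y => projV n (Matrix.vecMul n (symCurl σ y))) x -
    Pmat n * dnMat n (symCurl σ) x * Pmat n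

/-- `div_F div_F U`. -/
def divFdivF (n : V3) (U : V3 → M3) (x : V3) : ℝ :=
  ∑ i, ∑ j, pdF n i (fun y => pdF n j (fun z => U z i j) y) x

/-!
Both sides equal `div_F ((curl σ) n)`.

Taking the trace of `tr₃ σ` with `τ = sym curl σ`, the normal parts leave
`2 div_F (n·τ) - ∂ₙ (tr τ - n·τ n)`. Here `tr τ = tr curl σ = 0` because `σ` is symmetric,
`n·τ n = n·(curl σ) n`, and `2 n·τ = n·curl σ + (curl σ) n`. As `n·curl σ = curl (n·σ)` is
divergence free, `div_F (n·curl σ) = -∂ₙ (n·(curl σ) n)`, which cancels the normal derivative.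

In `div_F div_F (tr₁ σ)`, the symmetrization is invisible because tangential derivatives
commute, and `Π` because `∇_F` is already tangential. Each row of `σ × n` is tangential, so its
surface divergence is its full divergence, and `div (v × n) = (curl v)·n`.
-/

section DirectionalDerivatives

variable {E : Type*} [NormedAddCommGroup E] [NormedSpace ℝ E]

lemma fderiv_const_dotProduct_apply {ι : Type*} [Fintype ι] (c : ι → ℝ) {u : E → ι → ℝ} {x : E}
    (hu : ∀ i, DifferentiableAt ℝ (fun y => u y i) x) (v : E) :
    fderiv ℝ (fun y => c ⬝ᵥ u y) x v = c ⬝ᵥ fun i => fderiv ℝ (fun y => u y i) x v := by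
  simp only [dotProduct]
  rw [fderiv_fun_sum fun i _ => (hu i).const_mul (c i)]
  simp [fderiv_const_mul (hu _)]

variable {F : Type*} [NormedAddCommGroup F] [NormedSpace ℝ F]

lemma differentiable_fderiv_apply {f : E → F} (hf : ContDiff ℝ 2 f) (v : E) :
    Differentiable ℝ fun y => fderiv ℝ f y v :=
  ((hf.fderiv_right (m := 1) (by norm_num)).clm_apply contDiff_const).differentiable (by norm_num)

lemma fderiv_fderiv_apply_comm {f : E → F} (hf : ContDiff ℝ 2 f) (v w x : E) :
    fderiv ℝ (fun y => fderiv ℝ f y v) x w = fderiv ℝ (fun y => fderiv ℝ f y w) x v := by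
  have hdiff : DifferentiableAt ℝ (fderiv ℝ f) x :=
    (hf.fderiv_right (m := 1) (by norm_num)).differentiable (by norm_num) x
  have hsecond (v w : E) :
      fderiv ℝ (fun y => fderiv ℝ f y v) x w = fderiv ℝ (fderiv ℝ f) x w v := by
    simp [fderiv_clm_apply hdiff (differentiableAt_const v)]
  rw [hsecond, hsecond]
  exact hf.contDiffAt.isSymmSndFDerivAt (by simp) w v

end DirectionalDerivatives

section Algebra

variable (n : V3)

lemma Pmat_mul_Pmat (hn : n ⬝ᵥ n = 1) : Pmat n * Pmat n = Pmat n := by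
  simp [Pmat, mul_sub, sub_mul, vecMulVec_mul_vecMulVec, hn]

lemma projV_eq_mulVec (v : V3) : projV n v = Pmat n *ᵥ v := by
  simp [projV, Pmat, sub_mulVec, vecMulVec_mulVec]

lemma trace_mul_Pmat (A : M3) : (A * Pmat n).trace = A.trace - n ⬝ᵥ A *ᵥ n := by
  rw [Pmat, mul_sub, mul_one, trace_sub, mul_vecMulVec, trace_vecMulVec, dotProduct_comm]

lemma trace_Pmat_mul_mul_Pmat (hn : n ⬝ᵥ n = 1) (A : M3) :
    (Pmat n * A * Pmat n).trace = A.trace - n ⬝ᵥ A *ᵥ n := by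
  rw [trace_mul_cycle, trace_mul_comm, Pmat_mul_Pmat n hn, trace_mul_Pmat]

lemma trace_symPart (A : M3) : (symPart A).trace = A.trace := by
  simp only [symPart, trace_smul, trace_add, trace_transpose, smul_eq_mul]
  ring

lemma dotProduct_symPart_mulVec (A : M3) : n ⬝ᵥ symPart A *ᵥ n = n ⬝ᵥ A *ᵥ n := by
  have htranspose : n ⬝ᵥ Aᵀ *ᵥ n = n ⬝ᵥ A *ᵥ n := by
    rw [mulVec_transpose, dotProduct_comm, dotProduct_mulVec]
  rw [symPart, smul_mulVec, add_mulVec, dotProduct_smul, dotProduct_add, htranspose, smul_eq_mul]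
  ring

lemma vecMul_symPart (A : M3) : n ᵥ* symPart A = (2 : ℝ)⁻¹ • (n ᵥ* A + A *ᵥ n) := by
  rw [symPart, vecMul_smul, vecMul_add, vecMul_transpose]

lemma crossProduct_eq_vecMul_mskw (u : V3) : crossProduct u n = u ᵥ* mskw n := by
  ext i
  rw [vecMul, vec3_dotProduct, cross_apply]
  fin_cases i <;> simp [mskw, sub_eq_add_neg, add_comm]

lemma rowCross_eq_mul_mskw (U : M3) : rowCross U n = U * mskw n := by
  ext i j
  rw [rowCross, of_apply, crossProduct_eq_vecMul_mskw, mul_apply_eq_vecMul]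

lemma rowCross_mul (A U : M3) : rowCross (A * U) n = A * rowCross U n := by
  rw [rowCross_eq_mul_mskw, rowCross_eq_mul_mskw, Matrix.mul_assoc]

end Algebra

section Divergence

/-- Divergence of a vector field, encoded as the trace of its gradient so that matrix identities
apply to it. -/
def divVec (u : V3 → V3) (x : V3) : ℝ := (gradMat u x).trace

/-- Surface divergence `div_F u = ∇_F · u`, encoded as the trace of the surface gradient; both sides
of the trace identity are brought to this form. -/
def divF (n : V3) (u : V3 → V3) (x : V3) : ℝ := (gradFMat n u x).trace

/-- Row-wise surface divergence of a matrix field, the inner divergence of `div_F div_F U`. -/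
def divFMat (n : V3) (U : V3 → M3) (x : V3) : V3 :=
  fun i => ∑ j, pdF n j (fun y => U y i j) x

variable (n : V3) {u : V3 → V3} {U : V3 → M3} {x : V3}

lemma fderiv_apply_eq_sum_pd (f : V3 → ℝ) (x v : V3) :
    fderiv ℝ f x v = ∑ k, v k * pd k f x := by
  conv_lhs => rw [pi_eq_sum_univ' v]
  simp [pd, Pi.single]

lemma pdF_eq_fderiv (i : Fin 3) (f : V3 → ℝ) :
    pdF n i f = fun y => fderiv ℝ f y (Pi.single i 1 - n i • n) := by
  funext y
  rw [pdF, ← fderiv_apply_eq_sum_pd, map_sub, map_smul, smul_eq_mul, pd]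

lemma pdF_const_mul_add (c : ℝ) {f g : V3 → ℝ} (hf : DifferentiableAt ℝ f x)
    (hg : DifferentiableAt ℝ g x) (i : Fin 3) :
    pdF n i (fun y => c * (f y + g y)) x = c * (pdF n i f x + pdF n i g x) := by
  simp only [pdF_eq_fderiv]
  rw [fderiv_const_mul (hf.fun_add hg), fderiv_fun_add hf hg]
  simp only [_root_.smul_apply, _root_.add_apply, smul_eq_mul]

lemma differentiable_pdF {f : V3 → ℝ} (hf : ContDiff ℝ 2 f) (i : Fin 3) :
    Differentiable ℝ (pdF n i f) := by
  rw [pdF_eq_fderiv]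
  exact differentiable_fderiv_apply hf _

lemma pdF_comm {f : V3 → ℝ} (hf : ContDiff ℝ 2 f) (i j : Fin 3) :
    pdF n i (pdF n j f) x = pdF n j (pdF n i f) x := by
  simp only [pdF_eq_fderiv]
  exact fderiv_fderiv_apply_comm hf _ _ x

lemma gradFMat_eq_mul_Pmat (u : V3 → V3) (x : V3) : gradFMat n u x = gradMat u x * Pmat n := by
  ext i j
  simp [gradFMat, pdF, gradMat, Pmat, mul_sub, mul_vecMulVec, vecMulVec_apply, mulVec,
    dotProduct, mul_comm]

lemma gradMat_mulVec (A : M3) (hu : ∀ i, DifferentiableAt ℝ (fun y => u y i) x) :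
    gradMat (fun y => A *ᵥ u y) x = A * gradMat u x := by
  ext i j
  exact fderiv_const_dotProduct_apply (A i) hu _

lemma gradMat_mulVec_eq_fderiv (v : V3) :
    gradMat u x *ᵥ v = fun i => fderiv ℝ (fun y => u y i) x v := by
  ext i
  rw [mulVec, dotProduct_comm, fderiv_apply_eq_sum_pd]
  rfl

lemma trace_defF : (defF n u x).trace = divF n u x :=
  trace_symPart _

lemma divF_eq_divVec_sub (hu : ∀ i, DifferentiableAt ℝ (fun y => u y i) x) :
    divF n u x = divVec u x - fderiv ℝ (fun y => n ⬝ᵥ u y) x n := by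
  rw [divF, gradFMat_eq_mul_Pmat, trace_mul_Pmat, gradMat_mulVec_eq_fderiv,
    fderiv_const_dotProduct_apply n hu, divVec]

lemma divF_Pmat_mulVec (hn : n ⬝ᵥ n = 1) (hu : ∀ i, DifferentiableAt ℝ (fun y => u y i) x) :
    divF n (fun y => Pmat n *ᵥ u y) x = divF n u x := by
  rw [divF, divF, gradFMat_eq_mul_Pmat, gradFMat_eq_mul_Pmat, gradMat_mulVec _ hu,
    trace_Pmat_mul_mul_Pmat n hn, trace_mul_Pmat]

lemma divFMat_mul (A : M3) (hU : ∀ i j, DifferentiableAt ℝ (fun y => U y i j) x) :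
    divFMat n (fun y => A * U y) x = A *ᵥ divFMat n U x := by
  have hentry (i j : Fin 3) : pdF n j (fun y => (A * U y) i j) x =
      ∑ k, A i k * pdF n j (fun y => U y k j) x := by
    simp only [pdF_eq_fderiv]
    exact fderiv_const_dotProduct_apply (A i) (fun k => hU k j) _
  ext i
  simp only [divFMat, hentry, mulVec, dotProduct, Finset.mul_sum]
  exact Finset.sum_comm

end Divergence

section DoubleDivergence

variable (n : V3) {U : V3 → M3}

lemma differentiable_divFMat (hU : ∀ i j, ContDiff ℝ 2 fun y => U y i j) (i : Fin 3) :
    Differentiable ℝ fun y => divFMat n U y i :=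
  Differentiable.fun_sum fun j _ => differentiable_pdF n (hU i j) j

lemma divF_divFMat (hU : ∀ i j, ContDiff ℝ 2 fun y => U y i j) (x : V3) :
    divF n (divFMat n U) x = divFdivF n U x := by
  unfold divF trace divFdivF
  refine Finset.sum_congr rfl fun i _ => ?_
  simp only [gradFMat, diag_apply, of_apply, divFMat, pdF_eq_fderiv n i]
  rw [fderiv_fun_sum fun j _ => differentiable_pdF n (hU i j) j x, _root_.sum_apply]

lemma divFdivF_Pmat_mul (hn : n ⬝ᵥ n = 1) (hU : ∀ i j, ContDiff ℝ 2 fun y => U y i j) (x : V3) :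
    divFdivF n (fun y => Pmat n * U y) x = divFdivF n U x := by
  have hPU (i j : Fin 3) : ContDiff ℝ 2 fun y => (Pmat n * U y) i j := by
    simp only [mul_apply]
    fun_prop
  have hdiv : divFMat n (fun y => Pmat n * U y) = fun y => Pmat n *ᵥ divFMat n U y :=
    funext fun y => divFMat_mul n _ fun i j => (hU i j).differentiable (by norm_num) y
  rw [← divF_divFMat n hPU, hdiv, divF_Pmat_mulVec n hn fun i => differentiable_divFMat n hU i x,
    divF_divFMat n hU]

lemma divFdivF_transpose (hU : ∀ i j, ContDiff ℝ 2 fun y => U y i j) (x : V3) :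
    divFdivF n (fun y => (U y)ᵀ) x = divFdivF n U x := by
  rw [divFdivF, Finset.sum_comm]
  exact Finset.sum_congr rfl fun i _ => Finset.sum_congr rfl fun j _ => pdF_comm n (hU i j) j i

lemma divFdivF_symPart (hU : ∀ i j, ContDiff ℝ 2 fun y => U y i j) (x : V3) :
    divFdivF n (fun y => symPart (U y)) x = divFdivF n U x := by
  have hinner (i j : Fin 3) : pdF n j (fun y => symPart (U y) i j) = fun y =>
      2⁻¹ * (pdF n j (fun z => U z i j) y + pdF n j (fun z => U z j i) y) :=
    funext fun y => pdF_const_mul_add n _ ((hU i j).differentiable (by norm_num) y)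
      ((hU j i).differentiable (by norm_num) y) j
  have houter (i j : Fin 3) : pdF n i (pdF n j fun y => symPart (U y) i j) x =
      2⁻¹ * (pdF n i (pdF n j fun y => U y i j) x + pdF n i (pdF n j fun y => U y j i) x) := by
    rw [hinner]
    exact pdF_const_mul_add n _ (differentiable_pdF n (hU i j) j x)
      (differentiable_pdF n (hU j i) j x) i
  have hsum : divFdivF n (fun y => symPart (U y)) x =
      2⁻¹ * (divFdivF n U x + divFdivF n (fun y => (U y)ᵀ) x) := by
    simp only [divFdivF, houter, Finset.mul_sum, Finset.sum_add_distrib, mul_add, transpose_apply]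
  rw [hsum, divFdivF_transpose n hU]
  ring

end DoubleDivergence

section Curl

variable (n : V3) {u : V3 → V3} {σ : V3 → M3} {x : V3}

lemma divVec_curlVec (hu : ∀ i, ContDiff ℝ 2 fun y => u y i) (x : V3) :
    divVec (curlVec u) x = 0 := by
  have hcomm (i j k : Fin 3) : pd i (pd j fun y => u y k) x = pd j (pd i fun y => u y k) x :=
    fderiv_fderiv_apply_comm (hu k) _ _ x
  have hsub (i j k l m : Fin 3) :
      pd i (fun y => pd j (fun z => u z k) y - pd l (fun z => u z m) y) x =
        pd i (pd j fun z => u z k) x - pd i (pd l fun z => u z m) x :=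
    congrArg (fun L => L (Pi.single i 1)) (fderiv_fun_sub
      (differentiable_fderiv_apply (hu k) _ x) (differentiable_fderiv_apply (hu m) _ x))
  calc divVec (curlVec u) x
      = pd 0 (fun y => pd 1 (fun z => u z 2) y - pd 2 (fun z => u z 1) y) x +
          pd 1 (fun y => pd 2 (fun z => u z 0) y - pd 0 (fun z => u z 2) y) x +
          pd 2 (fun y => pd 0 (fun z => u z 1) y - pd 1 (fun z => u z 0) y) x :=
        Fin.sum_univ_three _
    _ = 0 := by
        rw [hsub, hsub, hsub, hcomm 1 0, hcomm 2 0, hcomm 2 1]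
        ring

lemma divVec_crossProduct_const (hu : ∀ i, DifferentiableAt ℝ (fun y => u y i) x) :
    divVec (fun y => crossProduct (u y) n) x = curlVec u x ⬝ᵥ n := by
  simp only [crossProduct_eq_vecMul_mskw, ← mulVec_transpose]
  rw [divVec, gradMat_mulVec _ hu, vec3_dotProduct]
  simp only [trace, diag_apply, mul_apply, transpose_apply, of_apply, gradMat, curlVec, mskw,
    Fin.sum_univ_three, cons_val', cons_val_fin_one, cons_val_zero, cons_val_one, cons_val]
  ring

lemma divF_crossProduct_const (hu : ∀ i, DifferentiableAt ℝ (fun y => u y i) x) :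
    divF n (fun y => crossProduct (u y) n) x = curlVec u x ⬝ᵥ n := by
  have hcross (i : Fin 3) : DifferentiableAt ℝ (fun y => crossProduct (u y) n i) x := by
    simp only [crossProduct_eq_vecMul_mskw, vecMul, dotProduct]
    fun_prop
  rw [divF_eq_divVec_sub n hcross, divVec_crossProduct_const n hu]
  simp

lemma divFMat_rowCross (hσ : ∀ i j, DifferentiableAt ℝ (fun y => σ y i j) x) :
    divFMat n (fun y => rowCross (σ y) n) x = curlMat σ x *ᵥ n :=
  funext fun i => divF_crossProduct_const n (hσ i)

lemma vecMul_curlMat (a : V3) (hσ : ∀ i j, DifferentiableAt ℝ (fun y => σ y i j) x) :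
    a ᵥ* curlMat σ x = curlVec (fun y => a ᵥ* σ y) x := by
  have hpd (j k : Fin 3) : pd j (fun y => (a ᵥ* σ y) k) x =
      ∑ i, a i * pd j (fun y => σ y i k) x :=
    fderiv_const_dotProduct_apply a (fun i => hσ i k) _
  simp only [curlVec, hpd]
  ext j
  fin_cases j <;> simp [curlVec, vecMul, dotProduct, curlMat, mul_sub]

lemma trace_curlMat_of_isSymm (hsymm : ∀ y, (σ y).IsSymm) (x : V3) : (curlMat σ x).trace = 0 := by
  have hentry (i j : Fin 3) : (fun y => σ y i j) = fun y => σ y j i :=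
    funext fun y => (hsymm y).apply j i
  calc (curlMat σ x).trace
      = (pd 1 (fun y => σ y 0 2) x - pd 2 (fun y => σ y 0 1) x) +
          (pd 2 (fun y => σ y 1 0) x - pd 0 (fun y => σ y 1 2) x) +
          (pd 0 (fun y => σ y 2 1) x - pd 1 (fun y => σ y 2 0) x) := Fin.sum_univ_three _
    _ = 0 := by
        rw [hentry 1 0, hentry 2 0, hentry 2 1]
        ring

lemma differentiable_curlMat (hσ : ∀ i j, ContDiff ℝ 2 fun y => σ y i j) (i j : Fin 3) :
    Differentiable ℝ fun y => curlMat σ y i j := by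
  have hpd (k l : Fin 3) : Differentiable ℝ (pd k fun y => σ y i l) :=
    differentiable_fderiv_apply (hσ i l) _
  fin_cases j <;> exact (hpd _ _).sub (hpd _ _)

lemma divF_vecMul_curlMat (hσ : ∀ i j, ContDiff ℝ 2 fun y => σ y i j) (x : V3) :
    divF n (fun y => n ᵥ* curlMat σ y) x =
      -fderiv ℝ (fun y => n ⬝ᵥ curlMat σ y *ᵥ n) x n := by
  have hdiff (i : Fin 3) : DifferentiableAt ℝ (fun y => (n ᵥ* curlMat σ y) i) x := by
    have hcurl := differentiable_curlMat hσ
    simp only [vecMul, dotProduct]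
    fun_prop
  have hvecMul : (fun y => n ᵥ* curlMat σ y) = curlVec fun y => n ᵥ* σ y :=
    funext fun y => vecMul_curlMat n fun i j => (hσ i j).differentiable (by norm_num) y
  have hdiv : divVec (fun y => n ᵥ* curlMat σ y) x = 0 := by
    rw [hvecMul]
    refine divVec_curlVec (fun i => ?_) x
    simp only [vecMul, dotProduct]
    fun_prop
  rw [divF_eq_divVec_sub n hdiff, hdiv, zero_sub]
  simp only [dotProduct_mulVec, dotProduct_comm]

end Curl

section TraceOperators

variable (n : V3) {τ : V3 → M3} {σ : V3 → M3} {x : V3}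

lemma trace_dnMat (hτ : ∀ i j, DifferentiableAt ℝ (fun y => τ y i j) x) :
    (dnMat n τ x).trace = fderiv ℝ (fun y => (τ y).trace) x n := by
  simp only [trace, diag_apply]
  rw [fderiv_fun_sum fun i _ => hτ i i, _root_.sum_apply]
  rfl

lemma dotProduct_dnMat_mulVec (a b : V3) (hτ : ∀ i j, DifferentiableAt ℝ (fun y => τ y i j) x) :
    a ⬝ᵥ dnMat n τ x *ᵥ b = fderiv ℝ (fun y => a ⬝ᵥ τ y *ᵥ b) x n := by
  have hrow (i : Fin 3) : fderiv ℝ (fun y => (τ y *ᵥ b) i) x n = (dnMat n τ x *ᵥ b) i := by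
    simp only [mulVec, dotProduct_comm _ b]
    exact fderiv_const_dotProduct_apply b (hτ i) n
  rw [fderiv_const_dotProduct_apply a _ n]
  · simp only [hrow]
  · intro i
    simp only [mulVec, dotProduct]
    fun_prop

lemma divF_vecMul_symPart (a : V3) (hτ : ∀ i j, DifferentiableAt ℝ (fun y => τ y i j) x) :
    divF n (fun y => a ᵥ* symPart (τ y)) x =
      2⁻¹ * (divF n (fun y => a ᵥ* τ y) x + divF n (fun y => τ y *ᵥ a) x) := by
  have hleft (i : Fin 3) : DifferentiableAt ℝ (fun y => (a ᵥ* τ y) i) x := by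
    simp only [vecMul, dotProduct]
    fun_prop
  have hright (i : Fin 3) : DifferentiableAt ℝ (fun y => (τ y *ᵥ a) i) x := by
    simp only [mulVec, dotProduct]
    fun_prop
  simp only [vecMul_symPart]
  simp only [divF, trace, ← Finset.sum_add_distrib, Finset.mul_sum]
  exact Finset.sum_congr rfl fun i _ =>
    pdF_const_mul_add n 2⁻¹ (hleft i) (hright i) i

lemma trace_tr3 (hn : n ⬝ᵥ n = 1)
    (hτ : ∀ i j, DifferentiableAt ℝ (fun y => symCurl σ y i j) x) :
    (tr3 n σ x).trace = 2 * divF n (fun y => n ᵥ* symCurl σ y) x -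
      (fderiv ℝ (fun y => (symCurl σ y).trace) x n -
        fderiv ℝ (fun y => n ⬝ᵥ symCurl σ y *ᵥ n) x n) := by
  have hvecMul (i : Fin 3) : DifferentiableAt ℝ (fun y => (n ᵥ* symCurl σ y) i) x := by
    simp only [vecMul, dotProduct]
    fun_prop
  simp only [tr3, projV_eq_mulVec]
  rw [trace_sub, trace_smul, trace_defF, divF_Pmat_mulVec n hn hvecMul,
    trace_Pmat_mul_mul_Pmat n hn, trace_dnMat n hτ, dotProduct_dnMat_mulVec n n n hτ, smul_eq_mul]

lemma trace_tr3_eq_divF_curlMat_mulVec (hn : n ⬝ᵥ n = 1)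
    (hσ : ∀ i j, ContDiff ℝ 2 fun y => σ y i j) (hsymm : ∀ y, (σ y).IsSymm) (x : V3) :
    (tr3 n σ x).trace = divF n (fun y => curlMat σ y *ᵥ n) x := by
  have hcurl (i j : Fin 3) : DifferentiableAt ℝ (fun y => curlMat σ y i j) x :=
    differentiable_curlMat hσ i j x
  have hsymCurl (i j : Fin 3) : DifferentiableAt ℝ (fun y => symCurl σ y i j) x :=
    ((hcurl i j).fun_add (hcurl j i)).const_mul _
  rw [trace_tr3 n hn hsymCurl]
  simp only [symCurl, trace_symPart, dotProduct_symPart_mulVec, trace_curlMat_of_isSymm hsymm]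
  rw [divF_vecMul_symPart n n hcurl, divF_vecMul_curlMat n hσ, fderiv_fun_const]
  simp

lemma divFdivF_tr1_eq_divF_curlMat_mulVec (hn : n ⬝ᵥ n = 1)
    (hσ : ∀ i j, ContDiff ℝ 2 fun y => σ y i j) (x : V3) :
    divFdivF n (tr1 n σ) x = divF n (fun y => curlMat σ y *ᵥ n) x := by
  have hcross (i j : Fin 3) : ContDiff ℝ 2 fun y => rowCross (σ y) n i j := by
    simp only [rowCross_eq_mul_mskw, mul_apply]
    fun_prop
  have hPcross (i j : Fin 3) : ContDiff ℝ 2 fun y => (Pmat n * rowCross (σ y) n) i j := by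
    simp only [mul_apply]
    fun_prop
  have hdiv : divFMat n (fun y => rowCross (σ y) n) = fun y => curlMat σ y *ᵥ n :=
    funext fun y => divFMat_rowCross n fun i j => (hσ i j).differentiable (by norm_num) y
  have htr1 : tr1 n σ = fun y => symPart (Pmat n * rowCross (σ y) n) :=
    funext fun y => congrArg symPart (rowCross_mul n (Pmat n) (σ y))
  rw [htr1, divFdivF_symPart n hPcross, divFdivF_Pmat_mul n hn hcross, ← divF_divFMat n hcross,
    hdiv]

end TraceOperators

theorem trace_tr3_eq_divFdivF_tr1_general (n : V3) (hn : n ⬝ᵥ n = 1)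
    (σ : V3 → M3) (hσ : ∀ i j, ContDiff ℝ 2 fun x => σ x i j)
    (hsymm : ∀ x, (σ x).IsSymm) (x : V3) :
    (tr3 n σ x).trace = divFdivF n (tr1 n σ) x := by
  rw [trace_tr3_eq_divF_curlMat_mulVec n hn hσ hsymm, divFdivF_tr1_eq_divF_curlMat_mulVec n hn hσ]

/-- `tr(tr₃ σ) = div_F div_F (tr₁ σ)` for smooth symmetric
traceless matrix fields `σ`. -/
theorem trace_tr3_eq_divFdivF_tr1 (n : V3) (hn : n ⬝ᵥ n = 1)
    (σ : V3 → M3) (hσ : ∀ i j, ContDiff ℝ (⊤ : ℕ∞) fun x => σ x i j)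
    (hsym : ∀ x, (σ x)ᵀ = σ x) (htr : ∀ x, (σ x).trace = 0) (x : V3) :
    (tr3 n σ x).trace = divFdivF n (tr1 n σ) x :=
  trace_tr3_eq_divFdivF_tr1_general n hn σ (fun i j => mod_cast contDiff_infty.1 (hσ i j) 2) hsym x
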